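/- arXiv:2407.11903 — 3 statements merged into one kernel-verified Lean document; each statement's English description precedes it below -/
import Mathlib

section
/- Let m ≥ 1 and let u : ℝ² → ℝ^m be a smooth map with sup_{x ∈ ℝ²} ‖Du(x)‖ < ∞ solving the minimal surface system on all of ℝ². Then u is affine, i.e. there exist an m×2 matrix B and c ∈ ℝ^m with u(x) = Bx + c for all x ∈ ℝ². -/
open Real Matrix

/-- Jacobian matrix of a map `u : ℝⁿ → ℝᵐ` at `x`. -/
noncomputable def jacobianMatrix {n m : ℕ}
    (u : EuclideanSpace ℝ (Fin n) → EuclideanSpace ℝ (Fin m))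
    (x : EuclideanSpace ℝ (Fin n)) : Matrix (Fin m) (Fin n) ℝ :=
  Matrix.of fun α i => fderiv ℝ (fun y => u y α) x (EuclideanSpace.single i 1)

/-- The induced metric `g = Iₙ + (Du)ᵀ Du` of the graph of `u`. -/
noncomputable def inducedMetric {n m : ℕ}
    (u : EuclideanSpace ℝ (Fin n) → EuclideanSpace ℝ (Fin m))
    (x : EuclideanSpace ℝ (Fin n)) : Matrix (Fin n) (Fin n) ℝ :=
  (1 : Matrix (Fin n) (Fin n) ℝ) + (jacobianMatrix u x)ᵀ * jacobianMatrix u x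

/-- `u` solves the minimal surface system: `∑ᵢⱼ gⁱʲ ∂ᵢ∂ⱼuᵅ = 0` for all `α`. -/
def SolvesMSS {n m : ℕ}
    (u : EuclideanSpace ℝ (Fin n) → EuclideanSpace ℝ (Fin m)) : Prop :=
  ∀ x, ∀ α : Fin m, ∑ i, ∑ j, (inducedMetric u x)⁻¹ i j *
    fderiv ℝ (fun y => fderiv ℝ (fun z => u z α) y (EuclideanSpace.single j 1)) x
      (EuclideanSpace.single i 1) = 0

/-!
The system forces the trace of the Christoffel symbols of the graph to vanish. In dimension two
this makes the rows of the unimodular metric `g / √(det g)` closed one-forms, so the metric is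
`D²φ` for a convex `φ` with `det D²φ = 1`.

The Lewy map `x ↦ x + ∇φ(x)` does not contract distances, hence is a global diffeomorphism of the
plane, and viewed as a complex coordinate `ζ` it is isothermal for `D²φ`. Each component of `u` is
harmonic for this metric, so it is the real part of an entire function of `ζ`; when the component
is Lipschitz, this function has bounded derivative and the Liouville theorem gives `Re (a ζ + b)`.
The same applies to the coordinates `x₀` and `x₁`, so `ζ` is affine in `x`, and so is the component.
-/

open Complex (I)
open scoped NNReal Topology RealInnerProductSpace

local notation "ℝ²" => EuclideanSpace ℝ (Fin 2)

/-- The partial derivative `∂f/∂xᵢ`, written `∂[i] f`; it is `0` wherever `f` is not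
differentiable. -/
noncomputable def partialDeriv {ι F : Type*} [Fintype ι] [DecidableEq ι] [NormedAddCommGroup F]
    [NormedSpace ℝ F] (i : ι) (f : EuclideanSpace ℝ ι → F) (x : EuclideanSpace ℝ ι) : F :=
  fderiv ℝ f x (EuclideanSpace.single i 1)

local notation:max "∂[" i "]" => partialDeriv i

section PartialDerivatives

variable {ι F : Type*} [Fintype ι] [DecidableEq ι] [NormedAddCommGroup F] [NormedSpace ℝ F]
  {f : EuclideanSpace ℝ ι → F} {x : EuclideanSpace ℝ ι}

lemma fderiv_apply_eq_sum_partialDeriv (v : EuclideanSpace ℝ ι) :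
    fderiv ℝ f x v = ∑ i, v i • ∂[i] f x := by
  conv_lhs => rw [← (EuclideanSpace.basisFun ι ℝ).sum_repr v]
  simp only [map_sum, map_smul, EuclideanSpace.basisFun_repr, EuclideanSpace.basisFun_apply,
    partialDeriv]

lemma contDiff_partialDeriv {k : WithTop ℕ∞} (hf : ContDiff ℝ (k + 1) f) (i : ι) :
    ContDiff ℝ k (∂[i] f) :=
  (hf.fderiv_right le_rfl).clm_apply contDiff_const

lemma partialDeriv_partialDeriv (hf : ContDiff ℝ 2 f) (i j : ι) :
    ∂[i] (∂[j] f) x =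
      fderiv ℝ (fderiv ℝ f) x (EuclideanSpace.single i 1) (EuclideanSpace.single j 1) := by
  have hdiff : DifferentiableAt ℝ (fderiv ℝ f) x :=
    (hf.fderiv_right (m := 1) le_rfl).differentiable one_ne_zero x
  change fderiv ℝ (fun y => fderiv ℝ f y (EuclideanSpace.single j 1)) x _ = _
  rw [fderiv_clm_apply hdiff (differentiableAt_const _)]
  simp

lemma partialDeriv_comm (hf : ContDiff ℝ 2 f) (i j : ι) :
    ∂[i] (∂[j] f) x = ∂[j] (∂[i] f) x := by
  rw [partialDeriv_partialDeriv hf, partialDeriv_partialDeriv hf]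
  exact hf.contDiffAt.isSymmSndFDerivAt (by simp) _ _

lemma partialDeriv_fun_mul {f g : EuclideanSpace ℝ ι → ℝ} (hf : DifferentiableAt ℝ f x)
    (hg : DifferentiableAt ℝ g x) (i : ι) :
    ∂[i] (fun y => f y * g y) x = ∂[i] f x * g x + f x * ∂[i] g x := by
  simp only [partialDeriv, fderiv_fun_mul hf hg, _root_.add_apply, _root_.smul_apply, smul_eq_mul]
  ring

lemma partialDeriv_fun_sub {g : EuclideanSpace ℝ ι → F} (hf : DifferentiableAt ℝ f x)
    (hg : DifferentiableAt ℝ g x) (i : ι) :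
    ∂[i] (fun y => f y - g y) x = ∂[i] f x - ∂[i] g x := by
  simp only [partialDeriv, fderiv_fun_sub hf hg, _root_.sub_apply]

lemma exists_contDiff_partialDeriv_eq [CompleteSpace F] {k : ℕ} (hk : k ≠ 0)
    {ω : ι → EuclideanSpace ℝ ι → F} (hω : ∀ i, ContDiff ℝ k (ω i))
    (hclosed : ∀ i j, ∂[i] (ω j) = ∂[j] (ω i)) :
    ∃ f : EuclideanSpace ℝ ι → F, ContDiff ℝ (k + 1) f ∧ ∀ i, ∂[i] f = ω i := by
  let η : EuclideanSpace ℝ ι → EuclideanSpace ℝ ι →L[ℝ] F :=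
    fun x => ∑ i, (EuclideanSpace.proj i : EuclideanSpace ℝ ι →L[ℝ] ℝ).smulRight (ω i x)
  have hη : ContDiff ℝ k η := ContDiff.sum fun i _ => contDiff_const.smulRight (hω i)
  have hη_apply (x v) : η x v = ∑ i, v i • ω i x := by simp [η]
  have hη_diff : Differentiable ℝ η := hη.differentiable (by exact_mod_cast hk)
  have hη_symm (a v w : EuclideanSpace ℝ ι) : fderiv ℝ η a v w = fderiv ℝ η a w v := by
    have hη_fderiv (v w) : fderiv ℝ η a v w = ∑ j, ∑ i, (w j * v i) • ∂[i] (ω j) a := by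
      have heval : fderiv ℝ (fun x => η x w) a v = fderiv ℝ η a v w := by
        rw [fderiv_clm_apply (hη_diff a) (differentiableAt_const w)]
        simp
      have hsum : HasFDerivAt (fun x => η x w) (∑ j, w j • fderiv ℝ (ω j) a) a := by
        simp only [hη_apply]
        exact HasFDerivAt.fun_sum fun j _ =>
          ((hω j).differentiable (by exact_mod_cast hk) a).hasFDerivAt.const_smul (w j)
      rw [← heval, hsum.fderiv]
      simp only [_root_.sum_apply, _root_.smul_apply, fderiv_apply_eq_sum_partialDeriv,
        Finset.smul_sum, smul_smul]
    rw [hη_fderiv, hη_fderiv, Finset.sum_comm]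
    simp only [hclosed, mul_comm]
  obtain ⟨f, hf⟩ := convex_univ.exists_forall_hasFDerivAt_of_fderiv_symmetric isOpen_univ
    hη_diff.differentiableOn fun a _ => hη_symm a
  have hfderiv : fderiv ℝ f = η := funext fun x => (hf x trivial).fderiv
  refine ⟨f, ?_, fun i => funext fun x => ?_⟩
  · exact contDiff_succ_iff_fderiv.2
      ⟨fun x => (hf x trivial).differentiableAt, by simp, hfderiv ▸ hη⟩
  · simp [partialDeriv, hfderiv, hη_apply]

lemma exists_contDiff_hessian_eq [CompleteSpace F] {k : ℕ} (hk : k ≠ 0)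
    {A : ι → ι → EuclideanSpace ℝ ι → F} (hA : ∀ i j, ContDiff ℝ k (A i j))
    (hsymm : ∀ i j, A i j = A j i) (hclosed : ∀ i j l, ∂[j] (A i l) = ∂[l] (A i j)) :
    ∃ φ : EuclideanSpace ℝ ι → F, ContDiff ℝ (k + 2) φ ∧ ∀ i j, ∂[i] (∂[j] φ) = A i j := by
  choose ω hω hωA using fun i => exists_contDiff_partialDeriv_eq hk (hA i) (hclosed i)
  obtain ⟨φ, hφ, hφω⟩ := exists_contDiff_partialDeriv_eq k.succ_ne_zero (ω := ω)
    (by exact_mod_cast hω) (fun i j => by rw [hωA, hωA, hsymm])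
  refine ⟨φ, ?_, fun i j => by rw [hφω, hωA, hsymm]⟩
  exact_mod_cast hφ

end PartialDerivatives

section StronglyMonotone

lemma isClosed_range_of_antilipschitzWith {α β : Type*} [PseudoEMetricSpace α] [EMetricSpace β]
    [CompleteSpace α] {K : ℝ≥0} {f : α → β} (hf : AntilipschitzWith K f) (hcont : Continuous f) :
    IsClosed (Set.range f) := by
  refine isClosed_of_closure_subset fun y hy => ?_
  have : (Filter.comap f (𝓝 y)).NeBot := Filter.comap_neBot_iff_frequently.2
    (by simpa only [Set.mem_range] using mem_closure_iff_frequently.1 hy)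
  obtain ⟨x, hx⟩ := CompleteSpace.complete ((cauchy_nhds (a := y)).comap hf.comap_uniformity_le)
  exact ⟨x, tendsto_nhds_unique (hcont.continuousAt.mono_left hx) Filter.tendsto_comap⟩

variable {E : Type*} [NormedAddCommGroup E] [InnerProductSpace ℝ E]

lemma mul_norm_sq_le_inner_sub_of_fderiv {Φ : E → E} {c : ℝ} (hΦ : Differentiable ℝ Φ)
    (hmono : ∀ x v, c * ‖v‖ ^ 2 ≤ ⟪fderiv ℝ Φ x v, v⟫) (x y : E) :
    c * ‖x - y‖ ^ 2 ≤ ⟪Φ x - Φ y, x - y⟫ := by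
  set v := x - y with hv
  have hderiv (t : ℝ) : HasDerivAt (fun t : ℝ => ⟪Φ (y + t • v), v⟫)
      ⟪fderiv ℝ Φ (y + t • v) v, v⟫ t := by
    have hline : HasDerivAt (fun t : ℝ => y + t • v) v t := by
      simpa using ((hasDerivAt_id t).smul_const v).const_add y
    simpa using ((hΦ _).hasFDerivAt.comp_hasDerivAt t hline).inner ℝ (hasDerivAt_const t v)
  obtain ⟨t, -, ht⟩ := exists_hasDerivAt_eq_slope _ _ zero_lt_one
    (fun t _ => (hderiv t).continuousAt.continuousWithinAt) (fun t _ => hderiv t)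
  calc c * ‖v‖ ^ 2 ≤ ⟪fderiv ℝ Φ (y + t • v) v, v⟫ := hmono _ v
    _ = ⟪Φ x - Φ y, v⟫ := by rw [ht, inner_sub_left]; simp [hv]

lemma antilipschitzWith_of_mul_norm_sq_le_inner {Φ : E → E} {c : ℝ≥0} (hc : 0 < c)
    (hmono : ∀ x y, c * ‖x - y‖ ^ 2 ≤ ⟪Φ x - Φ y, x - y⟫) : AntilipschitzWith c⁻¹ Φ := by
  refine AntilipschitzWith.of_le_mul_dist fun x y => ?_
  have hle : c * ‖x - y‖ ^ 2 ≤ ‖Φ x - Φ y‖ * ‖x - y‖ :=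
    (hmono x y).trans (real_inner_le_norm _ _)
  rw [dist_eq_norm, dist_eq_norm, NNReal.coe_inv, ← div_eq_inv_mul,
    le_div_iff₀ (by exact_mod_cast hc)]
  rcases (norm_nonneg (x - y)).eq_or_lt with h0 | hpos
  · simp [← h0]
  · exact le_of_mul_le_mul_right (by linarith) hpos

variable [CompleteSpace E]

lemma exists_continuousLinearEquiv_of_mul_norm_sq_le_inner (L : E →L[ℝ] E) {c : ℝ} (hc : 0 < c)
    (hL : ∀ v, c * ‖v‖ ^ 2 ≤ ⟪L v, v⟫) : ∃ e : E ≃L[ℝ] E, (e : E →L[ℝ] E) = L := by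
  have hcoercive : IsCoercive ((innerSL ℝ).comp L) :=
    ⟨c, hc, fun v => by simpa [sq, mul_assoc] using hL v⟩
  refine ⟨hcoercive.continuousLinearEquivOfBilin, ContinuousLinearMap.ext fun v => ?_⟩
  exact (hcoercive.unique_continuousLinearEquivOfBilin fun w => rfl).symm

lemma exists_homeomorph_of_mul_norm_sq_le_inner_fderiv {Φ : E → E} (hΦ : ContDiff ℝ 1 Φ)
    {c : ℝ≥0} (hc : 0 < c) (hmono : ∀ x v, c * ‖v‖ ^ 2 ≤ ⟪fderiv ℝ Φ x v, v⟫) :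
    ∃ e : E ≃ₜ E, ⇑e = Φ ∧ LipschitzWith c⁻¹ e.symm := by
  have hanti : AntilipschitzWith c⁻¹ Φ := antilipschitzWith_of_mul_norm_sq_le_inner hc
    (mul_norm_sq_le_inner_sub_of_fderiv (hΦ.differentiable one_ne_zero) hmono)
  choose L hL using fun x =>
    exists_continuousLinearEquiv_of_mul_norm_sq_le_inner (fderiv ℝ Φ x) hc (hmono x)
  have hopen : IsOpenMap Φ := isOpenMap_of_hasStrictFDerivAt_equiv (f' := L) fun x => by
    rw [hL]
    exact hΦ.contDiffAt.hasStrictFDerivAt one_ne_zero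
  have hclopen : IsClopen (Set.range Φ) :=
    ⟨isClosed_range_of_antilipschitzWith hanti hΦ.continuous, hopen.isOpen_range⟩
  have hsurj : Function.Surjective Φ :=
    Set.range_eq_univ.1 (hclopen.eq_univ (Set.range_nonempty Φ))
  let e : E ≃ₜ E := IsHomeomorph.homeomorph Φ ⟨hΦ.continuous, hopen, hanti.injective, hsurj⟩
  exact ⟨e, rfl, hanti.to_rightInverse e.apply_symm_apply⟩

end StronglyMonotone

section EntireFunctions

lemma norm_deriv_le_of_lipschitzWith_re {f : ℂ → ℂ} {z : ℂ} (hf : DifferentiableAt ℂ f z) {K : ℝ≥0}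
    (hK : LipschitzWith K fun w => (f w).re) : ‖deriv f z‖ ≤ K := by
  set a := deriv f z
  have hre : HasFDerivAt (fun w => (f w).re)
      (Complex.reCLM ∘L (ContinuousLinearMap.toSpanSingleton ℂ a).restrictScalars ℝ) z :=
    Complex.reCLM.hasFDerivAt.comp z (hf.hasDerivAt.hasFDerivAt.restrictScalars ℝ)
  -- Evaluate the differential `v ↦ Re (a v)` of `Re f` in the direction `v = conj a`.
  have hnorm : ‖a‖ ^ 2 ≤ K * ‖a‖ := calc
    ‖a‖ ^ 2 = (star a * a).re := by simp [← Complex.normSq_eq_norm_sq, Complex.normSq_apply]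
    _ ≤ ‖(star a * a).re‖ := le_abs_self _
    _ ≤ K * ‖star a‖ := by
      simpa using ContinuousLinearMap.le_of_opNorm_le _ (hre.le_of_lipschitz hK) (star a)
    _ = K * ‖a‖ := by rw [norm_star]
  rcases (norm_nonneg a).eq_or_lt with h0 | hpos
  · simp [← h0]
  · exact le_of_mul_le_mul_right (by linarith) hpos

lemma exists_eq_mul_add_of_lipschitzWith_re {f : ℂ → ℂ} (hf : Differentiable ℂ f) {K : ℝ≥0}
    (hK : LipschitzWith K fun z => (f z).re) : ∃ a b : ℂ, ∀ z, f z = a * z + b := by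
  have hbounded : Bornology.IsBounded (Set.range (deriv f)) :=
    isBounded_iff_forall_norm_le.2
      ⟨K, Set.forall_mem_range.2 fun z => norm_deriv_le_of_lipschitzWith_re (hf z) hK⟩
  have hconst (z) : deriv f z = deriv f 0 :=
    (hf.contDiff (n := 2)).differentiable_deriv_two.apply_eq_apply_of_bounded hbounded z 0
  have haffine (z) : HasDerivAt (fun z => f z - deriv f 0 * z) 0 z := by
    simpa [hconst z] using (hf z).hasDerivAt.fun_sub ((hasDerivAt_id z).const_mul (deriv f 0))
  refine ⟨deriv f 0, f 0, fun z => ?_⟩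
  have := is_const_of_deriv_eq_zero (fun z => (haffine z).differentiableAt)
    (fun z => (haffine z).deriv) z 0
  linear_combination this

end EntireFunctions

section Hessian

variable {ι : Type*} [Fintype ι] [DecidableEq ι] {φ : EuclideanSpace ℝ ι → ℝ}
  {x : EuclideanSpace ℝ ι}

/-- The Hessian matrix of `φ` at `x`. -/
noncomputable def hessian (φ : EuclideanSpace ℝ ι → ℝ) (x : EuclideanSpace ℝ ι) : Matrix ι ι ℝ :=
  Matrix.of fun i j => ∂[i] (∂[j] φ) x

lemma isSymm_hessian (hφ : ContDiff ℝ 2 φ) : (hessian φ x).IsSymm :=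
  Matrix.IsSymm.ext fun i j => partialDeriv_comm hφ j i

lemma contDiff_hessian {k : WithTop ℕ∞} (hφ : ContDiff ℝ (k + 1 + 1) φ) (i j : ι) :
    ContDiff ℝ k fun x => hessian φ x i j :=
  contDiff_partialDeriv (contDiff_partialDeriv hφ j) i

lemma partialDeriv_hessian_comm (hφ : ContDiff ℝ 3 φ) (i j k : ι) :
    ∂[i] (fun y => hessian φ y j k) x = ∂[j] (fun y => hessian φ y i k) x :=
  partialDeriv_comm (contDiff_partialDeriv (by exact_mod_cast hφ) k) i j

end Hessian

section LewyMap

variable {ι : Type*} [Fintype ι] [DecidableEq ι] {φ : EuclideanSpace ℝ ι → ℝ}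
  {x : EuclideanSpace ℝ ι}

/-- The Lewy transformation `x ↦ x + ∇φ(x)`. For convex `φ` it is a global change of variables which
does not contract distances. -/
noncomputable def lewyMap (φ : EuclideanSpace ℝ ι → ℝ) (x : EuclideanSpace ℝ ι) :
    EuclideanSpace ℝ ι :=
  x + WithLp.toLp 2 fun i => ∂[i] φ x

lemma contDiff_lewyMap {k : WithTop ℕ∞} (hφ : ContDiff ℝ (k + 1) φ) : ContDiff ℝ k (lewyMap φ) :=
  contDiff_id.add (contDiff_euclidean.2 fun i => contDiff_partialDeriv hφ i)

lemma hasFDerivAt_lewyMap (hφ : ContDiff ℝ 2 φ) (x : EuclideanSpace ℝ ι) :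
    HasFDerivAt (lewyMap φ) (.id ℝ _ + Matrix.toEuclideanCLM (𝕜 := ℝ) (hessian φ x)) x := by
  refine (hasFDerivAt_id x).add (hasStrictFDerivAt_euclidean.2 fun i => ?_).hasFDerivAt
  refine ((contDiff_partialDeriv hφ i).contDiffAt.hasStrictFDerivAt one_ne_zero).congr_fderiv
    (ContinuousLinearMap.ext fun v => ?_)
  rw [fderiv_apply_eq_sum_partialDeriv]
  simp [Matrix.mulVec, dotProduct, hessian, partialDeriv_comm hφ i, mul_comm]

lemma partialDeriv_lewyMap_apply (hφ : ContDiff ℝ 2 φ) (i j : ι) :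
    ∂[i] (lewyMap φ) x j = (1 + hessian φ x) j i := by
  rw [partialDeriv, (hasFDerivAt_lewyMap hφ x).fderiv]
  simp [Matrix.one_apply]

lemma norm_sq_le_inner_fderiv_lewyMap (hφ : ContDiff ℝ 2 φ) (hpos : (hessian φ x).PosSemidef)
    (v : EuclideanSpace ℝ ι) : ‖v‖ ^ 2 ≤ ⟪fderiv ℝ (lewyMap φ) x v, v⟫ := by
  have hnonneg : 0 ≤ ⟪Matrix.toEuclideanCLM (𝕜 := ℝ) (hessian φ x) v, v⟫ := by
    simpa [EuclideanSpace.inner_eq_star_dotProduct] using hpos.dotProduct_mulVec_nonneg v.ofLp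
  rw [(hasFDerivAt_lewyMap hφ x).fderiv, _root_.add_apply, inner_add_left,
    ContinuousLinearMap.id_apply, real_inner_self_eq_norm_sq]
  exact le_add_of_nonneg_right hnonneg

lemma exists_homeomorph_eq_lewyMap (hφ : ContDiff ℝ 2 φ) (hpos : ∀ x, (hessian φ x).PosSemidef) :
    ∃ e : EuclideanSpace ℝ ι ≃ₜ EuclideanSpace ℝ ι, ⇑e = lewyMap φ ∧ LipschitzWith 1 e.symm := by
  simpa using exists_homeomorph_of_mul_norm_sq_le_inner_fderiv (contDiff_lewyMap hφ) one_pos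
    fun x v => by simpa using norm_sq_le_inner_fderiv_lewyMap hφ (hpos x) v

end LewyMap

section ComplexCoordinate

lemma exists_fderiv_eq_mul {h ζ : ℝ² → ℂ} {x : ℝ²} (hζ : ∂[0] ζ x ≠ 0)
    (hcross : ∂[1] h x * ∂[0] ζ x = ∂[0] h x * ∂[1] ζ x) :
    ∃ μ : ℂ, ∀ v, fderiv ℝ h x v = μ * fderiv ℝ ζ x v := by
  refine ⟨∂[0] h x / ∂[0] ζ x, fun v => ?_⟩
  simp only [fderiv_apply_eq_sum_partialDeriv, Fin.sum_univ_two, Complex.real_smul]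
  field_simp
  linear_combination v 1 * hcross

lemma differentiable_comp_symm_of_fderiv_eq_mul {E : Type*} [NormedAddCommGroup E]
    [NormedSpace ℝ E] (ζ : E ≃ₜ ℂ)
    (hζ : ∀ x, ∃ L : E ≃L[ℝ] ℂ, HasFDerivAt ζ (L : E →L[ℝ] ℂ) x) {h : E → ℂ}
    (hh : Differentiable ℝ h) (hμ : ∀ x, ∃ μ : ℂ, ∀ v, fderiv ℝ h x v = μ * fderiv ℝ ζ x v) :
    Differentiable ℂ (h ∘ ζ.symm) := fun z => by
  obtain ⟨L, hL⟩ := hζ (ζ.symm z)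
  obtain ⟨μ, hμ⟩ := hμ (ζ.symm z)
  have hsymm : HasFDerivAt ζ.symm (L.symm : ℂ →L[ℝ] E) z :=
    HasFDerivAt.of_local_left_inverse ζ.symm.continuous.continuousAt hL
      (.of_forall ζ.apply_symm_apply)
  have hcomp := (hh (ζ.symm z)).hasFDerivAt.comp z hsymm
  refine (hasFDerivAt_of_restrictScalars ℝ (f' := ContinuousLinearMap.toSpanSingleton ℂ μ) hcomp
    (ContinuousLinearMap.ext fun w => ?_)).differentiableAt
  simp [hμ, hL.fderiv, mul_comm]

lemma partialDeriv_ofReal_add_mul_I {ι : Type*} [Fintype ι] [DecidableEq ι]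
    {f g : EuclideanSpace ℝ ι → ℝ} {x : EuclideanSpace ℝ ι} (hf : DifferentiableAt ℝ f x)
    (hg : DifferentiableAt ℝ g x) (i : ι) :
    ∂[i] (fun y => (f y : ℂ) + g y * I) x = ∂[i] f x + ∂[i] g x * I := by
  have hfC : HasFDerivAt (fun y => (f y : ℂ)) (Complex.ofRealCLM ∘L fderiv ℝ f x) x :=
    Complex.ofRealCLM.hasFDerivAt.comp x hf.hasFDerivAt
  have hgC : HasFDerivAt (fun y => (g y : ℂ)) (Complex.ofRealCLM ∘L fderiv ℝ g x) x :=
    Complex.ofRealCLM.hasFDerivAt.comp x hg.hasFDerivAt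
  simp only [partialDeriv, (hfC.fun_add (hgC.mul_const I)).fderiv]
  simp [mul_comm]

/-- The Lewy transformation of the plane as a complex coordinate
`x ↦ (x₀ + ∂₀φ(x)) + i (x₁ + ∂₁φ(x))`. -/
noncomputable def lewyCoord (φ : ℝ² → ℝ) (x : ℝ²) : ℂ :=
  Complex.orthonormalBasisOneI.repr.symm (lewyMap φ x)

variable {φ : ℝ² → ℝ}

lemma exists_homeomorph_eq_lewyCoord (hφ : ContDiff ℝ 2 φ)
    (hpos : ∀ x, (hessian φ x).PosSemidef) :
    ∃ ζ : ℝ² ≃ₜ ℂ, ⇑ζ = lewyCoord φ ∧ LipschitzWith 1 ζ.symm := by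
  obtain ⟨e, he, hlip⟩ := exists_homeomorph_eq_lewyMap hφ hpos
  refine ⟨e.trans Complex.orthonormalBasisOneI.repr.symm.toHomeomorph, ?_, ?_⟩
  · exact funext fun x => congrArg Complex.orthonormalBasisOneI.repr.symm (congrFun he x)
  · exact (one_mul (1 : ℝ≥0)) ▸ hlip.comp Complex.orthonormalBasisOneI.repr.lipschitz

lemma hasFDerivAt_lewyCoord (hφ : ContDiff ℝ 2 φ) (x : ℝ²) :
    HasFDerivAt (lewyCoord φ)
      ((Complex.orthonormalBasisOneI.repr.symm : ℝ² →L[ℝ] ℂ) ∘L fderiv ℝ (lewyMap φ) x) x :=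
  (ContinuousLinearMap.hasFDerivAt (Complex.orthonormalBasisOneI.repr.symm : ℝ² →L[ℝ] ℂ)).comp x
    ((contDiff_lewyMap hφ).differentiable one_ne_zero x).hasFDerivAt

lemma exists_hasFDerivAt_lewyCoord_equiv (hφ : ContDiff ℝ 2 φ) {x : ℝ²}
    (hpos : (hessian φ x).PosSemidef) :
    ∃ L : ℝ² ≃L[ℝ] ℂ, HasFDerivAt (lewyCoord φ) (L : ℝ² →L[ℝ] ℂ) x := by
  obtain ⟨L, hL⟩ := exists_continuousLinearEquiv_of_mul_norm_sq_le_inner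
    (fderiv ℝ (lewyMap φ) x) one_pos
    fun v => by simpa using norm_sq_le_inner_fderiv_lewyMap hφ hpos v
  refine ⟨L.trans Complex.orthonormalBasisOneI.repr.symm.toContinuousLinearEquiv, ?_⟩
  exact (hasFDerivAt_lewyCoord hφ x).congr_fderiv (by rw [← hL]; rfl)

lemma partialDeriv_lewyCoord (hφ : ContDiff ℝ 2 φ) (x : ℝ²) (i : Fin 2) :
    ∂[i] (lewyCoord φ) x = ((1 + hessian φ x) 0 i : ℝ) + ((1 + hessian φ x) 1 i : ℝ) * I := by
  rw [partialDeriv, (hasFDerivAt_lewyCoord hφ x).fderiv, ← partialDeriv_lewyMap_apply hφ,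
    ← partialDeriv_lewyMap_apply hφ]
  exact Complex.orthonormalBasisOneI_repr_symm_apply _

end ComplexCoordinate

section LinearizedMongeAmpere

lemma sum_inv_mul_eq_zero_iff {A : Matrix (Fin 2) (Fin 2) ℝ} {S : Fin 2 → Fin 2 → ℝ}
    (hA : A.det ≠ 0) : ∑ i, ∑ j, A⁻¹ i j * S i j = 0 ↔
      A 1 1 * S 0 0 - A 0 1 * S 0 1 - A 1 0 * S 1 0 + A 0 0 * S 1 1 = 0 := by
  have hsum : ∑ i, ∑ j, A⁻¹ i j * S i j =
      A.det⁻¹ * (A 1 1 * S 0 0 - A 0 1 * S 0 1 - A 1 0 * S 1 0 + A 0 0 * S 1 1) := by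
    simp only [Matrix.inv_def, Ring.inverse_eq_inv', Matrix.adjugate_fin_two, Fin.sum_univ_two,
      Matrix.smul_apply, Matrix.of_apply, Matrix.cons_val', Matrix.cons_val_zero,
      Matrix.cons_val_one, Matrix.cons_val_fin_one, smul_eq_mul]
    ring
  rw [hsum, mul_eq_zero_iff_left (inv_ne_zero hA)]

/-- `f` is annihilated by `∑ᵢⱼ (D²φ)⁻¹ᵢⱼ ∂ᵢ∂ⱼ`, the linearization at `φ` of the logarithm of the
Monge–Ampère operator `det D²φ`. The inverse is the junk value `0` where `D²φ` is singular. -/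
def SolvesLinearizedMongeAmpere {ι : Type*} [Fintype ι] [DecidableEq ι]
    (φ f : EuclideanSpace ℝ ι → ℝ) : Prop :=
  ∀ x, ∑ i, ∑ j, (hessian φ x)⁻¹ i j * ∂[i] (∂[j] f) x = 0

lemma solvesLinearizedMongeAmpere_coord {ι : Type*} [Fintype ι] [DecidableEq ι]
    (φ : EuclideanSpace ℝ ι → ℝ) (k : ι) : SolvesLinearizedMongeAmpere φ fun x => x k := by
  have hfderiv (y : EuclideanSpace ℝ ι) :
      fderiv ℝ (fun x : EuclideanSpace ℝ ι => x k) y = EuclideanSpace.proj k :=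
    (EuclideanSpace.proj k : EuclideanSpace ℝ ι →L[ℝ] ℝ).fderiv
  have hpartial (j : ι) :
      ∂[j] (fun x : EuclideanSpace ℝ ι => x k) = fun _ => EuclideanSpace.single j (1 : ℝ) k :=
    funext fun y => congrArg (fun L => L (EuclideanSpace.single j 1)) (hfderiv y)
  have hzero (i j : ι) (x) : ∂[i] (∂[j] fun x : EuclideanSpace ℝ ι => x k) x = 0 := by
    rw [hpartial, partialDeriv, fderiv_fun_const]
    rfl
  simp [SolvesLinearizedMongeAmpere, hzero]

variable {φ f : ℝ² → ℝ}

/-- `g` is a conjugate of `f` with respect to the metric `D²φ` on the plane: the Cauchy–Riemann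
equations `dg = ⋆df`, the Hodge star being normalized by `det D²φ = 1`. -/
def IsConjugate (φ f g : ℝ² → ℝ) : Prop :=
  ∀ i x, ∂[i] g x = hessian φ x i 1 * ∂[0] f x - hessian φ x i 0 * ∂[1] f x

lemma exists_isConjugate (hφ : ContDiff ℝ 3 φ) (hdet : ∀ x, (hessian φ x).det ≠ 0)
    (hf : ContDiff ℝ 2 f) (hsol : SolvesLinearizedMongeAmpere φ f) :
    ∃ g : ℝ² → ℝ, Differentiable ℝ g ∧ IsConjugate φ f g := by
  let ω (i : Fin 2) (x : ℝ²) : ℝ := hessian φ x i 1 * ∂[0] f x - hessian φ x i 0 * ∂[1] f x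
  have hH (i j) : ContDiff ℝ 1 fun x => hessian φ x i j :=
    contDiff_hessian (by exact_mod_cast hφ) i j
  have hDf (k) : ContDiff ℝ 1 (∂[k] f) := contDiff_partialDeriv hf k
  have hprod (i j k x) : DifferentiableAt ℝ (fun y => hessian φ y i j * ∂[k] f y) x :=
    ((hH i j).mul (hDf k)).differentiable one_ne_zero x
  have hω (i j x) : ∂[j] (ω i) x =
      ∂[j] (fun y => hessian φ y i 1) x * ∂[0] f x + hessian φ x i 1 * ∂[j] (∂[0] f) x
        - (∂[j] (fun y => hessian φ y i 0) x * ∂[1] f x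
          + hessian φ x i 0 * ∂[j] (∂[1] f) x) := by
    rw [partialDeriv_fun_sub (hprod i 1 0 x) (hprod i 0 1 x),
      partialDeriv_fun_mul ((hH i 1).differentiable one_ne_zero x)
        ((hDf 0).differentiable one_ne_zero x),
      partialDeriv_fun_mul ((hH i 0).differentiable one_ne_zero x)
        ((hDf 1).differentiable one_ne_zero x)]
  have hclosed : ∂[1] (ω 0) = ∂[0] (ω 1) := funext fun x => by
    have heq := (sum_inv_mul_eq_zero_iff (hdet x)).1 (hsol x)
    have hcomm : ∂[0] (∂[1] f) x = ∂[1] (∂[0] f) x := partialDeriv_comm hf 0 1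
    rw [hω, hω, partialDeriv_hessian_comm hφ 1 0 1, partialDeriv_hessian_comm hφ 1 0 0]
    linear_combination -heq - (hessian φ x 0 1 - hessian φ x 1 0) * hcomm
  obtain ⟨g, hg, hDg⟩ := exists_contDiff_partialDeriv_eq one_ne_zero (ω := ω)
    (fun i => ((hH i 1).mul (hDf 0)).sub ((hH i 0).mul (hDf 1)))
    (by simp only [Fin.forall_fin_two, hclosed, and_self])
  exact ⟨g, hg.differentiable (by simp), fun i => congrFun (hDg i)⟩

lemma IsConjugate.exists_fderiv_eq_mul_lewyCoord {g : ℝ² → ℝ} (hconj : IsConjugate φ f g)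
    (hφ : ContDiff ℝ 2 φ) {x : ℝ²} (hpos : (hessian φ x).PosDef) (hdet : (hessian φ x).det = 1)
    (hf : DifferentiableAt ℝ f x) (hg : DifferentiableAt ℝ g x) :
    ∃ μ : ℂ, ∀ v, fderiv ℝ (fun y => (f y : ℂ) + g y * I) x v =
      μ * fderiv ℝ (lewyCoord φ) x v := by
  have hsymm : hessian φ x 1 0 = hessian φ x 0 1 := (isSymm_hessian hφ).apply 0 1
  have hdiag : 0 < hessian φ x 0 0 := hpos.diag_pos
  rw [Matrix.det_fin_two, hsymm] at hdet
  apply exists_fderiv_eq_mul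
  · refine fun h0 => (add_pos one_pos hdiag).ne' ?_
    simpa [partialDeriv_lewyCoord hφ] using congrArg Complex.re h0
  · have hdetC :
        (hessian φ x 0 0 : ℂ) * hessian φ x 1 1 - hessian φ x 0 1 * hessian φ x 0 1 = 1 := by
      exact_mod_cast hdet
    simp only [partialDeriv_ofReal_add_mul_I hf hg, partialDeriv_lewyCoord hφ, hconj _ x,
      Matrix.add_apply, Matrix.one_apply_eq, Matrix.one_apply_ne zero_ne_one,
      Matrix.one_apply_ne one_ne_zero, zero_add, hsymm]
    push_cast
    linear_combination ((∂[0] f x : ℝ) * I - (∂[1] f x : ℝ)) * hdetC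
      + (hessian φ x 0 0 * (∂[1] f x : ℝ) * (1 + hessian φ x 1 1)
        - hessian φ x 0 1 * (∂[0] f x : ℝ)
        - hessian φ x 0 1 * hessian φ x 0 1 * (∂[1] f x : ℝ)) * Complex.I_sq

lemma exists_eq_re_mul_lewyCoord_add (hφ : ContDiff ℝ 3 φ) (hpos : ∀ x, (hessian φ x).PosDef)
    (hdet : ∀ x, (hessian φ x).det = 1) (hf : ContDiff ℝ 2 f)
    (hsol : SolvesLinearizedMongeAmpere φ f) {K : ℝ≥0} (hK : LipschitzWith K f) :
    ∃ a b : ℂ, ∀ x, f x = (a * lewyCoord φ x + b).re := by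
  have hφ2 : ContDiff ℝ 2 φ := hφ.of_le (by norm_num)
  have hpsd (x) := (hpos x).posSemidef
  obtain ⟨g, hg, hconj⟩ := exists_isConjugate hφ (fun x => (hpos x).det_pos.ne') hf hsol
  obtain ⟨ζ, hζ, hζlip⟩ := exists_homeomorph_eq_lewyCoord hφ2 hpsd
  let h : ℝ² → ℂ := fun x => f x + g x * I
  have hfd : Differentiable ℝ f := hf.differentiable two_ne_zero
  have hh : Differentiable ℝ h := by fun_prop
  have hentire : Differentiable ℂ (h ∘ ζ.symm) :=
    differentiable_comp_symm_of_fderiv_eq_mul ζ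
      (fun x => hζ ▸ exists_hasFDerivAt_lewyCoord_equiv hφ2 (hpsd x)) hh fun x =>
        hζ ▸ hconj.exists_fderiv_eq_mul_lewyCoord hφ2 (hpos x) (hdet x) (hfd x) (hg x)
  obtain ⟨a, b, hab⟩ := exists_eq_mul_add_of_lipschitzWith_re hentire
    (K := K * 1) (by simpa [h, Function.comp_def] using hK.comp hζlip)
  refine ⟨a, b, fun x => ?_⟩
  rw [← hζ, ← hab]
  simp [h]

lemma exists_eq_sum_add_of_eq_re_mul_add {ζ : ℝ² → ℂ} {f : ℝ² → ℝ} {a b : Fin 2 → ℂ}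
    (hcoord : ∀ i x, x i = (a i * ζ x + b i).re) {α β : ℂ} (hf : ∀ x, f x = (α * ζ x + β).re) :
    ∃ (B : Fin 2 → ℝ) (c : ℝ), ∀ x, f x = (∑ i, B i * x i) + c := by
  have hcomb (s : Fin 2 → ℝ) (x : ℝ²) :
      ∑ i, s i * x i = ((∑ i, s i • a i) * ζ x + ∑ i, s i • b i).re := by
    simp only [Finset.sum_mul, ← Finset.sum_add_distrib, Complex.re_sum]
    exact Finset.sum_congr rfl fun i _ => by
      rw [hcoord i x, smul_mul_assoc, ← smul_add, Complex.smul_re, smul_eq_mul]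
  have hindep : LinearIndependent ℝ a := by
    refine Fintype.linearIndependent_iff.2 fun s hs i => ?_
    have hconst (x : ℝ²) : ∑ i, s i * x i = (∑ i, s i • b i).re := by
      rw [hcomb, hs, zero_mul, zero_add]
    have h0 : (∑ i, s i • b i).re = 0 := by simpa using (hconst 0).symm
    simpa using (hconst (EuclideanSpace.single i 1)).trans h0
  let basis := basisOfLinearIndependentOfCardEqFinrank hindep (by simp)
  have hα : ∑ i, basis.repr α i • a i = α := by
    simpa [basis] using basis.sum_repr α
  refine ⟨basis.repr α, (β - ∑ i, basis.repr α i • b i).re, fun x => ?_⟩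
  rw [hf, hcomb, hα, ← Complex.add_re]
  congr 1
  ring

theorem exists_eq_sum_add_of_solvesLinearizedMongeAmpere (hφ : ContDiff ℝ 3 φ)
    (hpos : ∀ x, (hessian φ x).PosDef) (hdet : ∀ x, (hessian φ x).det = 1) (hf : ContDiff ℝ 2 f)
    (hsol : SolvesLinearizedMongeAmpere φ f) {K : ℝ≥0} (hK : LipschitzWith K f) :
    ∃ (B : Fin 2 → ℝ) (c : ℝ), ∀ x, f x = (∑ i, B i * x i) + c := by
  obtain ⟨α, β, hαβ⟩ := exists_eq_re_mul_lewyCoord_add hφ hpos hdet hf hsol hK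
  choose a b hab using fun i : Fin 2 => exists_eq_re_mul_lewyCoord_add hφ hpos hdet
    (f := fun x => x i) (by fun_prop) (solvesLinearizedMongeAmpere_coord φ i) (K := 1)
    (LipschitzWith.mk_one fun x y => PiLp.dist_apply_le x y i)
  exact exists_eq_sum_add_of_eq_re_mul_add hab hαβ

end LinearizedMongeAmpere

section InducedMetric

variable {n m : ℕ} {u : EuclideanSpace ℝ (Fin n) → EuclideanSpace ℝ (Fin m)}
  {x : EuclideanSpace ℝ (Fin n)}

lemma inducedMetric_apply (i j : Fin n) :
    inducedMetric u x i j =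
      (1 : Matrix (Fin n) (Fin n) ℝ) i j
        + ∑ α, ∂[i] (fun y => u y α) x * ∂[j] (fun y => u y α) x :=
  rfl

lemma posDef_inducedMetric : (inducedMetric u x).PosDef :=
  Matrix.PosDef.one.add_posSemidef (Matrix.posSemidef_conjTranspose_mul_self (jacobianMatrix u x))

lemma inducedMetric_symm (i j : Fin n) : inducedMetric u x i j = inducedMetric u x j i :=
  posDef_inducedMetric.isHermitian.apply j i

lemma contDiff_inducedMetric {k : WithTop ℕ∞} (hu : ContDiff ℝ (k + 1) u) (i j : Fin n) :
    ContDiff ℝ k fun x => inducedMetric u x i j := by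
  have hDu (i α) : ContDiff ℝ k (∂[i] fun y => u y α) :=
    contDiff_partialDeriv (contDiff_euclidean.1 hu α) i
  simp only [inducedMetric_apply]
  exact contDiff_const.add (ContDiff.sum fun α _ => (hDu i α).mul (hDu j α))

/-- The Christoffel symbol of the first kind `Γ_{k,ij} = ⟨∂ₖX, ∂ᵢ∂ⱼX⟩` of the graph
`X(x) = (x, u(x))`; the index lowered by the metric comes first. -/
noncomputable def christoffel (u : EuclideanSpace ℝ (Fin n) → EuclideanSpace ℝ (Fin m))
    (k i j : Fin n) (x : EuclideanSpace ℝ (Fin n)) : ℝ :=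
  ∑ α, ∂[k] (fun y => u y α) x * ∂[i] (∂[j] fun y => u y α) x

lemma christoffel_comm (hu : ContDiff ℝ 2 u) (k i j : Fin n) :
    christoffel u k i j x = christoffel u k j i x :=
  Finset.sum_congr rfl fun α _ => by rw [partialDeriv_comm (contDiff_euclidean.1 hu α)]

lemma partialDeriv_inducedMetric (hu : ContDiff ℝ 2 u) (k i j : Fin n) :
    ∂[k] (fun y => inducedMetric u y i j) x = christoffel u i k j x + christoffel u j k i x := by
  have hDu (i α) : DifferentiableAt ℝ (∂[i] fun y => u y α) x :=
    (contDiff_partialDeriv (contDiff_euclidean.1 hu α) i).differentiable one_ne_zero x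
  simp only [inducedMetric_apply, christoffel, ← Finset.sum_add_distrib]
  rw [partialDeriv, fderiv_const_add, fderiv_fun_sum fun α _ => (hDu i α).fun_mul (hDu j α),
    _root_.sum_apply]
  refine Finset.sum_congr rfl fun α _ => (partialDeriv_fun_mul (hDu i α) (hDu j α) k).trans ?_
  ring

lemma SolvesMSS.sum_inv_mul_christoffel (hMSS : SolvesMSS u) (k : Fin n) :
    ∑ i, ∑ j, (inducedMetric u x)⁻¹ i j * christoffel u k i j x = 0 := by
  calc ∑ i, ∑ j, (inducedMetric u x)⁻¹ i j * christoffel u k i j x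
      = ∑ α, ∂[k] (fun y => u y α) x *
          ∑ i, ∑ j, (inducedMetric u x)⁻¹ i j * ∂[i] (∂[j] fun y => u y α) x := by
        simp only [christoffel, Finset.mul_sum, mul_left_comm]
        rw [Finset.sum_comm_cycle]
    _ = 0 := Finset.sum_eq_zero fun α _ => mul_eq_zero_of_right _ (hMSS x α)

/-- The area density `√(det g)` of the graph of `u`. -/
noncomputable def areaElement (u : EuclideanSpace ℝ (Fin n) → EuclideanSpace ℝ (Fin m))
    (x : EuclideanSpace ℝ (Fin n)) : ℝ :=
  √(inducedMetric u x).det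

lemma areaElement_pos : 0 < areaElement u x :=
  Real.sqrt_pos.2 posDef_inducedMetric.det_pos

lemma areaElement_mul_self : areaElement u x * areaElement u x = (inducedMetric u x).det :=
  Real.mul_self_sqrt posDef_inducedMetric.det_pos.le

lemma contDiff_areaElement {k : WithTop ℕ∞} (hu : ContDiff ℝ (k + 1) u) :
    ContDiff ℝ k (areaElement u) := by
  have hdet : ContDiff ℝ k fun x => (inducedMetric u x).det := by
    simp only [Matrix.det_apply']
    exact ContDiff.sum fun σ _ => contDiff_const.mul
      (contDiff_prod fun i _ => contDiff_inducedMetric hu (σ i) i)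
  exact hdet.sqrt fun x => posDef_inducedMetric.det_pos.ne'

/-- The metric `g / √(det g)`, the conformal representative of `g` of determinant one in dimension
two. -/
noncomputable def unimodularMetric (u : EuclideanSpace ℝ (Fin n) → EuclideanSpace ℝ (Fin m))
    (x : EuclideanSpace ℝ (Fin n)) : Matrix (Fin n) (Fin n) ℝ :=
  (areaElement u x)⁻¹ • inducedMetric u x

lemma unimodularMetric_symm (i j : Fin n) : unimodularMetric u x i j = unimodularMetric u x j i :=
  congrArg ((areaElement u x)⁻¹ * ·) (inducedMetric_symm i j)

lemma posDef_unimodularMetric : (unimodularMetric u x).PosDef :=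
  posDef_inducedMetric.smul (inv_pos.2 areaElement_pos)

lemma contDiff_unimodularMetric {k : WithTop ℕ∞} (hu : ContDiff ℝ (k + 1) u) (i j : Fin n) :
    ContDiff ℝ k fun x => unimodularMetric u x i j :=
  ((contDiff_areaElement hu).inv fun _ => areaElement_pos.ne').mul (contDiff_inducedMetric hu i j)

lemma inv_unimodularMetric :
    (unimodularMetric u x)⁻¹ = areaElement u x • (inducedMetric u x)⁻¹ := by
  refine Matrix.inv_eq_right_inv ?_
  rw [unimodularMetric, smul_mul_smul_comm, inv_mul_cancel₀ areaElement_pos.ne', one_smul,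
    Matrix.mul_nonsing_inv _ posDef_inducedMetric.det_pos.ne'.isUnit]

lemma SolvesMSS.sum_inv_unimodularMetric (hMSS : SolvesMSS u) (α : Fin m) :
    ∑ i, ∑ j, (unimodularMetric u x)⁻¹ i j * ∂[i] (∂[j] fun y => u y α) x = 0 := by
  simp only [inv_unimodularMetric, Matrix.smul_apply, smul_eq_mul, mul_assoc, ← Finset.mul_sum]
  exact mul_eq_zero_of_right _ (hMSS x α)

-- The factor `(√(det g))³` makes both sides polynomial in `g` and its first derivatives.
lemma areaElement_pow_mul_partialDeriv_unimodularMetric (hu : ContDiff ℝ 2 u) (k i j : Fin n) :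
    areaElement u x ^ 3 * ∂[k] (fun y => unimodularMetric u y i j) x =
      (inducedMetric u x).det * ∂[k] (fun y => inducedMetric u y i j) x
        - areaElement u x * ∂[k] (areaElement u) x * inducedMetric u x i j := by
  have hfactor (y) : inducedMetric u y i j = areaElement u y * unimodularMetric u y i j :=
    (mul_inv_cancel_left₀ areaElement_pos.ne' _).symm
  have hproduct : ∂[k] (fun y => inducedMetric u y i j) x =
      ∂[k] (areaElement u) x * unimodularMetric u x i j
        + areaElement u x * ∂[k] (fun y => unimodularMetric u y i j) x := by
    simp only [hfactor]
    exact partialDeriv_fun_mul ((contDiff_areaElement hu).differentiable one_ne_zero x)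
      ((contDiff_unimodularMetric hu i j).differentiable one_ne_zero x) k
  rw [hproduct, ← areaElement_mul_self, hfactor]
  ring

end InducedMetric

section MinimalSurfaceSystem

variable {m : ℕ} {u : ℝ² → EuclideanSpace ℝ (Fin m)} {x : ℝ²}

lemma det_unimodularMetric : (unimodularMetric u x).det = 1 := by
  rw [unimodularMetric, Matrix.det_smul, Fintype.card_fin, ← areaElement_mul_self]
  field_simp [areaElement_pos.ne']

lemma SolvesMSS.trace_christoffel_eq_zero (hMSS : SolvesMSS u) (hu : ContDiff ℝ 2 u) (k : Fin 2) :
    inducedMetric u x 1 1 * christoffel u k 0 0 x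
      - 2 * inducedMetric u x 0 1 * christoffel u k 0 1 x
      + inducedMetric u x 0 0 * christoffel u k 1 1 x = 0 := by
  have htrace := (sum_inv_mul_eq_zero_iff posDef_inducedMetric.det_pos.ne').1
    (hMSS.sum_inv_mul_christoffel (x := x) k)
  rw [inducedMetric_symm 1 0, christoffel_comm hu k 1 0] at htrace
  linear_combination htrace

lemma areaElement_mul_partialDeriv (hu : ContDiff ℝ 2 u) (k : Fin 2) :
    areaElement u x * ∂[k] (areaElement u) x =
      inducedMetric u x 1 1 * christoffel u 0 k 0 x + inducedMetric u x 0 0 * christoffel u 1 k 1 x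
        - inducedMetric u x 0 1 * (christoffel u 0 k 1 x + christoffel u 1 k 0 x) := by
  have hg (i j) := (contDiff_inducedMetric hu i j).differentiable one_ne_zero x
  have hW := (contDiff_areaElement hu).differentiable one_ne_zero x
  have hsq : (fun y => areaElement u y * areaElement u y) = fun y =>
      inducedMetric u y 0 0 * inducedMetric u y 1 1
        - inducedMetric u y 0 1 * inducedMetric u y 1 0 :=
    funext fun y => by rw [areaElement_mul_self, Matrix.det_fin_two]
  have hderiv := congrArg (fun f => ∂[k] f x) hsq
  simp only [partialDeriv_fun_mul hW hW,
    partialDeriv_fun_sub ((hg 0 0).fun_mul (hg 1 1)) ((hg 0 1).fun_mul (hg 1 0)),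
    partialDeriv_fun_mul (hg _ _) (hg _ _), partialDeriv_inducedMetric hu] at hderiv
  have hsymm : inducedMetric u x 1 0 = inducedMetric u x 0 1 := inducedMetric_symm 1 0
  rw [hsymm] at hderiv
  linear_combination hderiv / 2

lemma partialDeriv_unimodularMetric_comm (hu : ContDiff ℝ 2 u) (hMSS : SolvesMSS u)
    (i j l : Fin 2) :
    ∂[j] (fun y => unimodularMetric u y i l) x = ∂[l] (fun y => unimodularMetric u y i j) x := by
  have hsymm : inducedMetric u x 1 0 = inducedMetric u x 0 1 := inducedMetric_symm 1 0
  have hΓ (k) := christoffel_comm hu (x := x) k 1 0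
  have hcross : ∀ i : Fin 2,
      ∂[1] (fun y => unimodularMetric u y i 0) x = ∂[0] (fun y => unimodularMetric u y i 1) x := by
    refine fun i =>
      mul_left_cancel₀ (pow_ne_zero 3 (areaElement_pos (u := u) (x := x)).ne') ?_
    simp only [areaElement_pow_mul_partialDeriv_unimodularMetric hu,
      areaElement_mul_partialDeriv hu, partialDeriv_inducedMetric hu, Matrix.det_fin_two]
    revert i
    simp only [Fin.forall_fin_two, hsymm, hΓ]
    have h₀ := hMSS.trace_christoffel_eq_zero hu (x := x) 0
    have h₁ := hMSS.trace_christoffel_eq_zero hu (x := x) 1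
    constructor
    · linear_combination inducedMetric u x 0 1 * h₀ - inducedMetric u x 0 0 * h₁
    · linear_combination inducedMetric u x 1 1 * h₀ - inducedMetric u x 0 1 * h₁
  revert j l
  simp only [Fin.forall_fin_two, hcross, and_self]

lemma exists_hessian_eq_unimodularMetric (hu : ContDiff ℝ 2 u) (hMSS : SolvesMSS u) :
    ∃ φ : ℝ² → ℝ, ContDiff ℝ 3 φ ∧ hessian φ = unimodularMetric u := by
  obtain ⟨φ, hφ, hD⟩ := exists_contDiff_hessian_eq one_ne_zero
    (A := fun i j x => unimodularMetric u x i j) (contDiff_unimodularMetric hu)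
    (fun i j => funext fun _ => unimodularMetric_symm i j)
    fun i j l => funext fun _ => partialDeriv_unimodularMetric_comm hu hMSS i j l
  refine ⟨φ, by exact_mod_cast hφ, funext fun x => Matrix.ext fun i j => congrFun (hD i j) x⟩

end MinimalSurfaceSystem

theorem mss_two_dim_lipschitz_rigidity_general {m : ℕ} {u : ℝ² → EuclideanSpace ℝ (Fin m)}
    (hu : ContDiff ℝ 2 u) (hMSS : SolvesMSS u) (α : Fin m) {K : ℝ≥0}
    (hK : LipschitzWith K fun x => u x α) :
    ∃ (B : Fin 2 → ℝ) (c : ℝ), ∀ x, u x α = (∑ i, B i * x i) + c := by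
  obtain ⟨φ, hφ, hhess⟩ := exists_hessian_eq_unimodularMetric hu hMSS
  have hsol : SolvesLinearizedMongeAmpere φ fun x => u x α := fun x => by
    rw [hhess]
    exact hMSS.sum_inv_unimodularMetric α
  exact exists_eq_sum_add_of_solvesLinearizedMongeAmpere hφ
    (fun x => hhess ▸ posDef_unimodularMetric) (fun x => hhess ▸ det_unimodularMetric)
    (contDiff_euclidean.1 hu α) hsol hK

/-- Entire Lipschitz (bounded-gradient) solutions of the minimal surface system in
two variables are affine. -/
theorem mss_two_dim_lipschitz_rigidity (m : ℕ) (hm : 1 ≤ m)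
    (u : EuclideanSpace ℝ (Fin 2) → EuclideanSpace ℝ (Fin m))
    (hu : ContDiff ℝ (⊤ : ℕ∞) u)
    (hgrad : ∃ C : ℝ, ∀ x, ‖fderiv ℝ u x‖ ≤ C)
    (hMSS : SolvesMSS u) :
    ∃ (B : Matrix (Fin m) (Fin 2) ℝ) (c : Fin m → ℝ),
      ∀ x, ∀ α : Fin m, u x α = (∑ i, B α i * x i) + c α := by
  obtain ⟨C, hC⟩ := hgrad
  have hlip : LipschitzWith C.toNNReal u :=
    lipschitzWith_of_nnnorm_fderiv_le (hu.differentiable (by simp))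
      fun x => NNReal.le_toNNReal_of_coe_le (hC x)
  have hcomponent (α : Fin m) : LipschitzWith C.toNNReal fun x => u x α :=
    .of_dist_le_mul fun x y => (PiLp.dist_apply_le _ _ α).trans (hlip.dist_le_mul x y)
  choose B c hBc using fun α =>
    mss_two_dim_lipschitz_rigidity_general (hu.of_le (WithTop.coe_le_coe.2 le_top)) hMSS α
      (hcomponent α)
  exact ⟨Matrix.of B, c, fun x α => hBc α x⟩
end

section
/- (Trapping-region inequality for the Bombieri–De Giorgi–Giusti ODE) For every real x > 1, one has 3(1 + x^{-5})(x^{-1} − x^{-5/2}) > (5/2) x^{-7/2} (x − x^{-5/2}). Equivalently, setting z = x^{1/2} > 1, the polynomial inequality 6z¹³ − 11z¹⁰ + 11z³ − 6 > 0 holds. -/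
open Real

/-!
In terms of `z = √x` the two sides differ by `(6z¹³ − 11z¹⁰ + 11z³ − 6) / (2z¹⁵)`. The numerator is
`6(z¹³ − 1) − 11z³(z⁷ − 1)`, which for `z = e^{2s}` is a positive multiple of
`6 sinh 13s − 11 sinh 7s`. As `sinh` is strictly convex on `[0, ∞)` and vanishes at `0`, the ratio
`sinh 13s / sinh 7s` exceeds `13/7`, and `13/7 > 11/6`.
-/

theorem strictConvexOn_sinh : StrictConvexOn ℝ (Set.Ici 0) sinh := by
  refine StrictMonoOn.strictConvexOn_of_deriv (convex_Ici 0) continuous_sinh.continuousOn ?_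
  rw [Real.deriv_sinh]
  exact cosh_strictMonoOn.mono interior_subset

theorem mul_sinh_lt_mul_sinh {a b : ℝ} (ha : 0 < a) (hab : a < b) : b * sinh a < a * sinh b := by
  have hb : b ∈ Set.Ici (0 : ℝ) := (ha.trans hab).le
  simpa using strictConvexOn_sinh.secant_strict_mono_aux1 Set.self_mem_Ici hb ha hab

theorem one_lt_sqrt {x : ℝ} (hx : 1 < x) : 1 < √x := by
  simpa using sqrt_lt_sqrt zero_le_one hx

theorem mul_pow_sub_inv_lt {w : ℝ} (hw : 1 < w) {m n : ℕ} (hm : 0 < m) (hmn : m < n) :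
    n * (w ^ m - (w ^ m)⁻¹) < m * (w ^ n - (w ^ n)⁻¹) := by
  have hlog : 0 < log w := log_pos hw
  have two_mul_sinh (k : ℕ) : w ^ k - (w ^ k)⁻¹ = 2 * sinh (k * log w) := by
    rw [← log_pow, sinh_log (by positivity)]
    ring
  have hsinh : n * log w * sinh (m * log w) < m * log w * sinh (n * log w) :=
    mul_sinh_lt_mul_sinh (by positivity) (by gcongr)
  rw [two_mul_sinh, two_mul_sinh]
  refine lt_of_mul_lt_mul_left ?_ hlog.le
  linarith

theorem mul_pow_mul_pow_sub_one_lt {z : ℝ} (hz : 1 < z) {n k : ℕ} (hn : 0 < n) (hk : 0 < k) :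
    (n + 2 * k) * (z ^ k * (z ^ n - 1)) < n * (z ^ (n + 2 * k) - 1) := by
  obtain ⟨w, hw, rfl⟩ : ∃ w : ℝ, 1 < w ∧ w ^ 2 = z :=
    ⟨√z, one_lt_sqrt hz, sq_sqrt (by positivity)⟩
  have hlt := mul_pow_sub_inv_lt hw hn (show n < n + 2 * k by lia)
  push_cast at hlt
  calc (n + 2 * k) * ((w ^ 2) ^ k * ((w ^ 2) ^ n - 1))
      = w ^ (n + 2 * k) * ((n + 2 * k) * (w ^ n - (w ^ n)⁻¹)) := by field_simp; ring
    _ < w ^ (n + 2 * k) * (n * (w ^ (n + 2 * k) - (w ^ (n + 2 * k))⁻¹)) := by gcongr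
    _ = n * ((w ^ 2) ^ (n + 2 * k) - 1) := by field_simp; ring

theorem trapping_polynomial_pos {z : ℝ} (hz : 1 < z) :
    0 < 6 * z ^ 13 - 11 * z ^ 10 + 11 * z ^ 3 - 6 := by
  have hratio : 13 * (z ^ 3 * (z ^ 7 - 1)) < 7 * (z ^ 13 - 1) := by
    convert mul_pow_mul_pow_sub_one_lt hz (n := 7) (k := 3) (by simp) (by simp) using 2 <;>
      norm_num
  have hpos : 0 < z ^ 3 * (z ^ 7 - 1) :=
    mul_pos (by positivity) (sub_pos.2 (one_lt_pow₀ hz (by norm_num)))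
  linarith

theorem rpow_neg_natCast_div_two {x : ℝ} (hx : 0 ≤ x) (n : ℕ) :
    x ^ (-(n : ℝ) / 2) = (√x ^ n)⁻¹ := by
  rw [rpow_div_two_eq_sqrt _ hx, rpow_neg (sqrt_nonneg x), rpow_natCast]

theorem trapping_gap_eq {x : ℝ} (hx : 0 < x) :
    3 * (1 + x ^ (-5 : ℝ)) * (x ^ (-1 : ℝ) - x ^ (-(5 : ℝ) / 2))
        - 5 / 2 * x ^ (-(7 : ℝ) / 2) * (x - x ^ (-(5 : ℝ) / 2))
      = (6 * √x ^ 13 - 11 * √x ^ 10 + 11 * √x ^ 3 - 6) / (2 * √x ^ 15) := by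
  have h_sq : x = √x ^ 2 := (sq_sqrt hx.le).symm
  have h_one : x ^ (-1 : ℝ) = (√x ^ 2)⁻¹ := by
    simpa using rpow_neg_natCast_div_two hx.le 2
  have h_five : x ^ (-5 : ℝ) = (√x ^ 10)⁻¹ := by
    rw [← rpow_neg_natCast_div_two hx.le]; norm_num
  have h_five_halves : x ^ (-(5 : ℝ) / 2) = (√x ^ 5)⁻¹ :=
    mod_cast rpow_neg_natCast_div_two hx.le 5
  have h_seven_halves : x ^ (-(7 : ℝ) / 2) = (√x ^ 7)⁻¹ :=
    mod_cast rpow_neg_natCast_div_two hx.le 7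
  have hz : 0 < √x := sqrt_pos.2 hx
  rw [h_one, h_five, h_five_halves, h_seven_halves]
  generalize √x = z at *
  subst h_sq
  field_simp
  ring

/-- Trapping-region inequality for the Bombieri–De Giorgi–Giusti ODE: for `x > 1`,
`3(1 + x⁻⁵)(x⁻¹ − x^{-5/2}) > (5/2) x^{-7/2} (x − x^{-5/2})`; equivalently, with
`z = √x > 1`, the polynomial inequality `6z¹³ − 11z¹⁰ + 11z³ − 6 > 0`. -/
theorem bdg_trapping_inequality :
    (∀ x : ℝ, 1 < x →
      3 * (1 + x ^ (-5 : ℝ)) * (x ^ (-1 : ℝ) - x ^ (-(5 : ℝ)/2))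
        > 5/2 * x ^ (-(7 : ℝ)/2) * (x - x ^ (-(5 : ℝ)/2))) ∧
    (∀ z : ℝ, 1 < z → 0 < 6 * z ^ 13 - 11 * z ^ 10 + 11 * z ^ 3 - 6) := by
  refine ⟨fun x hx ↦ ?_, fun z hz ↦ trapping_polynomial_pos hz⟩
  have hz : 1 < √x := one_lt_sqrt hx
  rw [gt_iff_lt, ← sub_pos, trapping_gap_eq (by positivity)]
  exact div_pos (trapping_polynomial_pos hz) (by positivity)
end

section
/- (A non-convex entire solution of the Monge–Ampère equation in three variables) For every smooth function f : ℝ → ℝ, the function u : ℝ³ → ℝ defined by u(x₁, x₂, x₃) = f(x₁) + x₁x₂ − x₃²/2 satisfies det D²u(x) = 1 for every x ∈ ℝ³, and u is not convex. -/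
open Real

/-- Second partial derivative matrix (Hessian) of `u` at `x`. -/
noncomputable def hessianMatrix {n : ℕ} (u : EuclideanSpace ℝ (Fin n) → ℝ)
    (x : EuclideanSpace ℝ (Fin n)) : Matrix (Fin n) (Fin n) ℝ :=
  Matrix.of fun i j =>
    fderiv ℝ (fun y => fderiv ℝ u y (EuclideanSpace.single j 1)) x (EuclideanSpace.single i 1)

/-!
Write `u = f(x₁) + q(x)` with the quadratic form `q(x) = x₁x₂ - x₃²/2`. The Hessian of `f(x₁)` only
affects the `(1, 1)` entry, whose cofactor in `D²u` is the determinant of `diag(0, -1)`, hence zero: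
`det D²u = det D²q = 1` whatever `f` is. Along the `x₃`-axis `u` is the strictly concave function
`f(0) - t²/2`, so it cannot be convex.
-/

open scoped Topology

/-- `H` is the second Fréchet derivative of `u` at `x`, as a bilinear form. Differentiability of `u`
near `x` is required separately because `fderiv` is zero where `u` is not differentiable. -/
structure HasSecondFDerivAt {E : Type*} [NormedAddCommGroup E] [NormedSpace ℝ E]
    (u : E → ℝ) (H : E →L[ℝ] E →L[ℝ] ℝ) (x : E) : Prop where
  eventually_differentiableAt : ∀ᶠ y in 𝓝 x, DifferentiableAt ℝ u y
  hasFDerivAt_fderiv : HasFDerivAt (fderiv ℝ u) H x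

namespace HasSecondFDerivAt

section NormedSpace

variable {E : Type*} [NormedAddCommGroup E] [NormedSpace ℝ E] {x : E}

theorem add {u v : E → ℝ} {H K : E →L[ℝ] E →L[ℝ] ℝ}
    (hu : HasSecondFDerivAt u H x) (hv : HasSecondFDerivAt v K x) :
    HasSecondFDerivAt (u + v) (H + K) x where
  eventually_differentiableAt := by
    filter_upwards [hu.eventually_differentiableAt, hv.eventually_differentiableAt]
      with y huy hvy using huy.add hvy
  hasFDerivAt_fderiv := by
    refine (hu.hasFDerivAt_fderiv.add hv.hasFDerivAt_fderiv).congr_of_eventuallyEq ?_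
    filter_upwards [hu.eventually_differentiableAt, hv.eventually_differentiableAt]
      with y huy hvy using fderiv_add huy hvy

theorem comp_continuousLinearMap {f : ℝ → ℝ} (L : E →L[ℝ] ℝ)
    (hf : ∀ᶠ t in 𝓝 (L x), DifferentiableAt ℝ f t) (hf' : DifferentiableAt ℝ (deriv f) (L x)) :
    HasSecondFDerivAt (f ∘ L) ((deriv (deriv f) (L x) • L).smulRight L) x := by
  have hfL : ∀ᶠ y in 𝓝 x, DifferentiableAt ℝ f (L y) := L.continuous.continuousAt.eventually hf
  have hfderiv : fderiv ℝ (f ∘ L) =ᶠ[𝓝 x] fun y => deriv f (L y) • L := by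
    filter_upwards [hfL] with y hfy
    exact (hfy.hasDerivAt.comp_hasFDerivAt y L.hasFDerivAt).fderiv
  refine ⟨hfL.mono fun y hfy => hfy.comp y L.differentiableAt, ?_⟩
  exact ((hf'.hasDerivAt.comp_hasFDerivAt x L.hasFDerivAt).smul_const L).congr_of_eventuallyEq
    hfderiv

theorem bilinear_diagonal (B : E →L[ℝ] E →L[ℝ] ℝ) (x : E) :
    HasSecondFDerivAt (fun y => B y y) (B + B.flip) x := by
  have hasFDerivAt (y : E) : HasFDerivAt (fun z => B z z) ((B + B.flip) y) y := by
    refine (B.hasFDerivAt_of_bilinear (hasFDerivAt_id y) (hasFDerivAt_id y)).congr_fderiv ?_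
    ext v
    simp
  have hfderiv : fderiv ℝ (fun z => B z z) = B + B.flip := funext fun y => (hasFDerivAt y).fderiv
  exact ⟨.of_forall fun y => (hasFDerivAt y).differentiableAt,
    hfderiv ▸ (B + B.flip).hasFDerivAt⟩

end NormedSpace

theorem hessianMatrix_eq {n : ℕ} {u : EuclideanSpace ℝ (Fin n) → ℝ}
    {H : EuclideanSpace ℝ (Fin n) →L[ℝ] EuclideanSpace ℝ (Fin n) →L[ℝ] ℝ}
    {x : EuclideanSpace ℝ (Fin n)} (hu : HasSecondFDerivAt u H x) :
    hessianMatrix u x =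
      Matrix.of fun i j => H (EuclideanSpace.single i 1) (EuclideanSpace.single j 1) := by
  ext i j
  have hpartial := hu.hasFDerivAt_fderiv.clm_apply
    (hasFDerivAt_const (EuclideanSpace.single j (1 : ℝ)) x)
  simp [hessianMatrix, hpartial.fderiv]

end HasSecondFDerivAt

theorem not_convexOn_univ_of_add_lt_two_mul {E : Type*} [AddCommGroup E] [Module ℝ E]
    {u : E → ℝ} {x v : E} (h : u (x + v) + u (x - v) < 2 * u x) : ¬ ConvexOn ℝ Set.univ u := by
  intro hconvex
  have hmidpoint : (1 / 2 : ℝ) • (x + v) + (1 / 2 : ℝ) • (x - v) = x := by module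
  have hle := hconvex.2 (Set.mem_univ (x + v)) (Set.mem_univ (x - v))
    (by norm_num : (0 : ℝ) ≤ 1 / 2) (by norm_num : (0 : ℝ) ≤ 1 / 2) (by norm_num)
  rw [hmidpoint, smul_eq_mul, smul_eq_mul] at hle
  linarith

/-- The function `f(x₁) + x₁x₂ - x₃²/2` on `ℝ³`, with coordinates indexed from `0`. -/
noncomputable def mongeAmpereSolution (f : ℝ → ℝ) (x : EuclideanSpace ℝ (Fin 3)) : ℝ :=
  f (x 0) + x 0 * x 1 - x 2 ^ 2 / 2

/-- A bilinear form `B` with diagonal `B x x = x₁x₂ - x₃²/2`, left unsymmetrized: the Hessian of its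
diagonal is `B + B.flip`. -/
noncomputable def mongeAmpereForm :
    EuclideanSpace ℝ (Fin 3) →L[ℝ] EuclideanSpace ℝ (Fin 3) →L[ℝ] ℝ :=
  (EuclideanSpace.proj 0 : EuclideanSpace ℝ (Fin 3) →L[ℝ] ℝ).smulRight (EuclideanSpace.proj 1) -
    (1 / 2 : ℝ) • (EuclideanSpace.proj 2 : EuclideanSpace ℝ (Fin 3) →L[ℝ] ℝ).smulRight
      (EuclideanSpace.proj 2)

theorem mongeAmpereForm_apply (v w : EuclideanSpace ℝ (Fin 3)) :
    mongeAmpereForm v w = v 0 * w 1 - v 2 * w 2 / 2 := by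
  simp only [mongeAmpereForm, sub_apply, smul_apply, ContinuousLinearMap.smulRight_apply,
    PiLp.proj_apply, smul_eq_mul]
  ring

theorem mongeAmpereSolution_eq_add (f : ℝ → ℝ) :
    mongeAmpereSolution f =
      f ∘ (EuclideanSpace.proj 0 : EuclideanSpace ℝ (Fin 3) →L[ℝ] ℝ) +
        fun x => mongeAmpereForm x x := by
  funext x
  simp only [mongeAmpereSolution, Pi.add_apply, Function.comp_apply, PiLp.proj_apply,
    mongeAmpereForm_apply]
  ring

theorem hessianMatrix_mongeAmpereSolution {f : ℝ → ℝ} {x : EuclideanSpace ℝ (Fin 3)}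
    (hf : ∀ᶠ t in 𝓝 (x 0), DifferentiableAt ℝ f t) (hf' : DifferentiableAt ℝ (deriv f) (x 0)) :
    hessianMatrix (mongeAmpereSolution f) x =
      !![deriv (deriv f) (x 0), 1, 0; 1, 0, 0; 0, 0, -1] := by
  have hsecond := (HasSecondFDerivAt.comp_continuousLinearMap (x := x) (EuclideanSpace.proj 0)
    hf hf').add (.bilinear_diagonal mongeAmpereForm x)
  have hform (v w : EuclideanSpace ℝ (Fin 3)) :
      mongeAmpereForm v w + mongeAmpereForm w v = v 0 * w 1 + v 1 * w 0 - v 2 * w 2 := by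
    rw [mongeAmpereForm_apply, mongeAmpereForm_apply]
    ring
  rw [mongeAmpereSolution_eq_add, hsecond.hessianMatrix_eq]
  ext i j
  fin_cases i <;> fin_cases j <;> simp [hform]

theorem det_hessianMatrix_mongeAmpereSolution {f : ℝ → ℝ} {x : EuclideanSpace ℝ (Fin 3)}
    (hf : ∀ᶠ t in 𝓝 (x 0), DifferentiableAt ℝ f t) (hf' : DifferentiableAt ℝ (deriv f) (x 0)) :
    (hessianMatrix (mongeAmpereSolution f) x).det = 1 := by
  rw [hessianMatrix_mongeAmpereSolution hf hf', Matrix.det_fin_three]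
  simp

theorem mongeAmpereSolution_smul_single_two (f : ℝ → ℝ) (t : ℝ) :
    mongeAmpereSolution f (t • EuclideanSpace.single 2 1) = f 0 - t ^ 2 / 2 := by
  simp [mongeAmpereSolution]

theorem not_convexOn_mongeAmpereSolution (f : ℝ → ℝ) :
    ¬ ConvexOn ℝ Set.univ (mongeAmpereSolution f) := by
  apply not_convexOn_univ_of_add_lt_two_mul (x := 0) (v := EuclideanSpace.single 2 1)
  have hzero := mongeAmpereSolution_smul_single_two f 0
  have hone := mongeAmpereSolution_smul_single_two f 1
  have hneg := mongeAmpereSolution_smul_single_two f (-1)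
  rw [zero_smul] at hzero
  rw [one_smul] at hone
  rw [neg_one_smul] at hneg
  rw [zero_add, zero_sub, hone, hneg, hzero]
  linarith

theorem nonconvex_monge_ampere_solution_general {f : ℝ → ℝ} (hf : Differentiable ℝ f)
    (hf' : Differentiable ℝ (deriv f)) {u : EuclideanSpace ℝ (Fin 3) → ℝ}
    (hu : ∀ x, u x = f (x 0) + x 0 * x 1 - x 2 ^ 2 / 2) :
    (∀ x, (hessianMatrix u x).det = 1) ∧ ¬ ConvexOn ℝ Set.univ u := by
  obtain rfl : u = mongeAmpereSolution f := funext hu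
  exact ⟨fun x => det_hessianMatrix_mongeAmpereSolution (.of_forall hf) (hf' (x 0)),
    not_convexOn_mongeAmpereSolution f⟩

/-- A non-convex entire solution of the Monge–Ampère equation in three variables:
for any smooth `f`, the function `u(x) = f(x₁) + x₁x₂ − x₃²/2` satisfies
`det D²u = 1` everywhere, and `u` is not convex. -/
theorem nonconvex_monge_ampere_solution (f : ℝ → ℝ) (hf : ContDiff ℝ (⊤ : ℕ∞) f)
    (u : EuclideanSpace ℝ (Fin 3) → ℝ)
    (hu : ∀ x, u x = f (x 0) + x 0 * x 1 - x 2 ^ 2 / 2) :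
    (∀ x, (hessianMatrix u x).det = 1) ∧ ¬ ConvexOn ℝ Set.univ u :=
  nonconvex_monge_ampere_solution_general (hf.differentiable (by simp))
    ((contDiff_infty_iff_deriv.1 hf).2.differentiable (by simp)) hu
end
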